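/- arXiv:2308.12012 — 2 statements merged into one kernel-verified Lean document; each statement's English description precedes it below -/
import Mathlib

section
/- Let D be a nonempty subset of ℝ² (with the river metric d*) which is not of the form {x₀} × I for some x₀ ∈ ℝ and some interval I ⊆ ℝ with 0 ∉ I (the paper phrases this as: D is not a ball of (ℝ²,d*)). Then D is convex if and only if both of the following hold: (i) for every point (x,y) ∈ D, the metric segment [(x,0),(x,y)], i.e. the vertical segment {(x,a) : a between 0 and y}, is contained in D; (ii) for all points (x₁,y₁), (x₂,y₂) ∈ D and every real t between x₁ and x₂, the point (t,0) belongs to D (equivalently, [a,b] × {0} ⊆ D, where a and b are the infimum and supremum of the first coordinates of points of D). -/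
/-- The river metric on ℝ². -/
noncomputable def riverDist (u v : ℝ × ℝ) : ℝ :=
  if u.1 = v.1 then |u.2 - v.2| else |u.2| + |v.2| + |u.1 - v.1|

/-- The metric segment between two points of ℝ² with the river metric. -/
def riverSegment (u v : ℝ × ℝ) : Set (ℝ × ℝ) :=
  {z | riverDist u z + riverDist z v = riverDist u v}

/-- A set is convex (w.r.t. the river metric) if it contains all metric segments
between its points. -/
def IsRiverConvex (K : Set (ℝ × ℝ)) : Prop :=
  ∀ u ∈ K, ∀ v ∈ K, riverSegment u v ⊆ K

/-- `m` is a midpoint of `u` and `v` for the river metric. -/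
def IsRiverMidpoint (u v m : ℝ × ℝ) : Prop :=
  riverDist u m = riverDist u v / 2 ∧ riverDist m v = riverDist u v / 2

/-
A metric segment between points of one vertical line is a Euclidean segment; between points of
different vertical lines it runs vertically to the river `y = 0`, along it, and vertically again.
So a convex set meeting two vertical lines contains the foot on the river of each of its points,
and a convex set inside one vertical line either contains the foot of that line or is of the
excluded form `{x₀} ×ˢ I`.
-/

section

open Set

theorem abs_sub_add_abs_sub_eq_iff {α : Type*} [AddCommGroup α] [LinearOrder α]
    [IsOrderedAddMonoid α] {a b c : α} : |a - b| + |b - c| = |a - c| ↔ b ∈ uIcc a c := by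
  rw [← sub_add_sub_cancel a b c, eq_comm, abs_add_eq_add_abs_iff, mem_uIcc]
  simp only [sub_nonneg, sub_nonpos]
  tauto

theorem riverDist_of_fst_eq (x y y' : ℝ) : riverDist (x, y) (x, y') = |y - y'| :=
  if_pos rfl

theorem riverDist_of_fst_ne {x x' : ℝ} (h : x ≠ x') (y y' : ℝ) :
    riverDist (x, y) (x', y') = |y| + |y'| + |x - x'| :=
  if_neg h

theorem riverDist_comm (u v : ℝ × ℝ) : riverDist u v = riverDist v u := by
  simp only [riverDist, eq_comm (a := u.1), abs_sub_comm u.1, abs_sub_comm u.2, add_comm |u.2|]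

theorem riverSegment_comm (u v : ℝ × ℝ) : riverSegment u v = riverSegment v u := by
  ext z
  simp only [riverSegment, mem_ofPred_eq, riverDist_comm u, riverDist_comm z v,
    add_comm (riverDist z u)]

theorem riverSegment_of_fst_eq (x y y' : ℝ) :
    riverSegment (x, y) (x, y') = {x} ×ˢ uIcc y y' := by
  ext ⟨t, b⟩
  simp only [riverSegment, mem_ofPred_eq, mem_prod, mem_singleton_iff]
  rcases eq_or_ne t x with rfl | htx
  · simp only [riverDist_of_fst_eq, abs_sub_add_abs_sub_eq_iff, true_and]
  · have detour_pos : 0 < |t - x| := abs_pos.2 (sub_ne_zero.2 htx)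
    simp only [riverDist_of_fst_eq, riverDist_of_fst_ne htx, riverDist_of_fst_ne htx.symm, htx,
      false_and, iff_false]
    linarith [abs_sub y y', abs_nonneg b, abs_nonneg (x - t)]

theorem mk_mem_riverSegment_iff_of_fst_ne {x x' : ℝ} (h : x ≠ x') (y y' b : ℝ) :
    (x, b) ∈ riverSegment (x, y) (x', y') ↔ b ∈ uIcc 0 y := by
  rw [← abs_sub_add_abs_sub_eq_iff, zero_sub, zero_sub, abs_neg, abs_neg, abs_sub_comm]
  simp only [riverSegment, mem_ofPred_eq, riverDist_of_fst_eq, riverDist_of_fst_ne h]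
  constructor <;> intro hb <;> linarith

theorem mk_mem_riverSegment_iff_of_ne_of_ne {x x' t : ℝ} (h : x ≠ x') (hx : t ≠ x) (hx' : t ≠ x')
    (y y' b : ℝ) :
    (t, b) ∈ riverSegment (x, y) (x', y') ↔ t ∈ uIcc x x' ∧ b = 0 := by
  rw [← abs_sub_add_abs_sub_eq_iff]
  simp only [riverSegment, mem_ofPred_eq, riverDist_of_fst_ne h, riverDist_of_fst_ne hx.symm,
    riverDist_of_fst_ne hx']
  have triangle : |x - x'| ≤ |x - t| + |t - x'| := abs_sub_le x t x'
  constructor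
  · intro hz
    have b_eq_zero : b = 0 := abs_nonpos_iff.1 (by linarith)
    subst b_eq_zero
    exact ⟨by linarith [abs_zero (α := ℝ)], rfl⟩
  · rintro ⟨ht, rfl⟩
    linarith [abs_zero (α := ℝ)]

theorem riverSegment_of_fst_ne {x x' : ℝ} (h : x ≠ x') (y y' : ℝ) :
    riverSegment (x, y) (x', y') =
      {x} ×ˢ uIcc 0 y ∪ uIcc x x' ×ˢ {0} ∪ {x'} ×ˢ uIcc 0 y' := by
  ext ⟨t, b⟩
  simp only [mem_union, mem_prod, mem_singleton_iff]
  rcases eq_or_ne t x with rfl | hx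
  · rw [mk_mem_riverSegment_iff_of_fst_ne h]
    have mem_of_eq_zero : b = 0 → b ∈ uIcc 0 y := fun hb => hb ▸ left_mem_uIcc
    tauto
  rcases eq_or_ne t x' with rfl | hx'
  · rw [riverSegment_comm, mk_mem_riverSegment_iff_of_fst_ne h.symm]
    have mem_of_eq_zero : b = 0 → b ∈ uIcc 0 y' := fun hb => hb ▸ left_mem_uIcc
    tauto
  · rw [mk_mem_riverSegment_iff_of_ne_of_ne h hx hx']
    tauto

namespace IsRiverConvex

variable {K : Set (ℝ × ℝ)}

theorem mk_zero_mem_of_mem_uIcc (hK : IsRiverConvex K) {p q : ℝ × ℝ} (hp : p ∈ K) (hq : q ∈ K)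
    (hpq : p.1 ≠ q.1) {t : ℝ} (ht : t ∈ uIcc p.1 q.1) : (t, (0 : ℝ)) ∈ K := by
  refine hK p hp q hq ?_
  rw [riverSegment_of_fst_ne hpq p.2 q.2]
  exact .inl (.inr ⟨ht, rfl⟩)

theorem ordConnected_fiber (hK : IsRiverConvex K) (x : ℝ) : {y | (x, y) ∈ K}.OrdConnected := by
  refine ordConnected_iff_uIcc_subset.2 fun y hy y' hy' b hb => hK _ hy _ hy' ?_
  rw [riverSegment_of_fst_eq]
  exact ⟨rfl, hb⟩

theorem eq_singleton_prod_fiber (hK : IsRiverConvex K) {p : ℝ × ℝ} (hp : p ∈ K)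
    (hfoot : (p.1, (0 : ℝ)) ∉ K) : K = {p.1} ×ˢ {y | (p.1, y) ∈ K} := by
  have same_fst : ∀ q ∈ K, q.1 = p.1 := by
    intro q hq
    by_contra hqp
    exact hfoot (hK.mk_zero_mem_of_mem_uIcc hp hq (Ne.symm hqp) left_mem_uIcc)
  ext ⟨x, y⟩
  constructor
  · intro hxy
    obtain rfl : x = p.1 := same_fst _ hxy
    exact ⟨rfl, hxy⟩
  · rintro ⟨rfl, hy⟩
    exact hy

end IsRiverConvex

theorem isRiverConvex_of_vertical_of_horizontal {K : Set (ℝ × ℝ)}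
    (vertical : ∀ p ∈ K, riverSegment (p.1, 0) p ⊆ K)
    (horizontal : ∀ p ∈ K, ∀ q ∈ K, ∀ t ∈ uIcc p.1 q.1, (t, (0 : ℝ)) ∈ K) :
    IsRiverConvex K := by
  have vertical' {x y : ℝ} (h : (x, y) ∈ K) : {x} ×ˢ uIcc 0 y ⊆ K :=
    riverSegment_of_fst_eq x 0 y ▸ vertical _ h
  rintro ⟨x, y⟩ hu ⟨x', y'⟩ hv
  rcases eq_or_ne x x' with rfl | h
  · rw [riverSegment_of_fst_eq]
    calc {x} ×ˢ uIcc y y' ⊆ {x} ×ˢ (uIcc y 0 ∪ uIcc 0 y') :=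
          prod_mono_right uIcc_subset_uIcc_union_uIcc
      _ = {x} ×ˢ uIcc 0 y ∪ {x} ×ˢ uIcc 0 y' := by rw [prod_union, uIcc_comm y 0]
      _ ⊆ K := union_subset (vertical' hu) (vertical' hv)
  · rw [riverSegment_of_fst_ne h]
    refine union_subset (union_subset (vertical' hu) ?_) (vertical' hv)
    rintro ⟨t, b⟩ ⟨ht, rfl⟩
    exact horizontal _ hu _ hv t ht

end

/-- Characterization of convex sets in (ℝ², d*) which are not balls, i.e. not of the
form {x₀} × I for an interval I not containing 0. -/
theorem river_convex_characterization (D : Set (ℝ × ℝ)) (hne : D.Nonempty)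
    (hnotball : ¬ ∃ (x₀ : ℝ) (I : Set ℝ), I.OrdConnected ∧ (0:ℝ) ∉ I ∧
      D = {x₀} ×ˢ I) :
    IsRiverConvex D ↔
      ((∀ p ∈ D, riverSegment (p.1, 0) p ⊆ D) ∧
        (∀ p ∈ D, ∀ q ∈ D, ∀ t ∈ Set.uIcc p.1 q.1, ((t, (0:ℝ)) : ℝ × ℝ) ∈ D)) := by
  refine ⟨fun hD => ?_, fun ⟨vertical, horizontal⟩ =>
    isRiverConvex_of_vertical_of_horizontal vertical horizontal⟩
  have foot_mem {p : ℝ × ℝ} (hp : p ∈ D) : (p.1, (0 : ℝ)) ∈ D := by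
    by_contra hfoot
    exact hnotball ⟨p.1, {y | (p.1, y) ∈ D}, hD.ordConnected_fiber p.1, hfoot,
      hD.eq_singleton_prod_fiber hp hfoot⟩
  refine ⟨fun p hp => hD _ (foot_mem hp) p hp, fun p hp q hq t ht => ?_⟩
  by_cases hpq : p.1 = q.1
  · obtain rfl : t = p.1 := by simpa [← hpq] using ht
    exact foot_mem hp
  · exact hD.mk_zero_mem_of_mem_uIcc hp hq hpq ht
end

section
/- The space (ℝ², d*) is totally convex: for any two distinct points v₁, v₂ ∈ ℝ² and any positive real numbers a, b with d*(v₁,v₂) = a + b, there exists a point v ∈ ℝ² such that d*(v₁,v) = a and d*(v,v₂) = b. -/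
/-!
The shortest way between points with different first coordinates runs vertically to the river
`y = 0`, along it, and vertically to the target. Each of the three legs is an isometric copy of a
real interval, and by the triangle inequality total convexity passes to the concatenation of legs
whose lengths add up to the distance of the endpoints.
-/

section TotalConvexity

variable {X : Type*} {d : X → X → ℝ} {u v w : X}

/-- Total convexity of a distance function `d` localised at a pair of points. Zero summands are
allowed, so that a division point may fall on the common endpoint of two concatenated legs. -/
def IsTotallyConvexBetween (d : X → X → ℝ) (u v : X) : Prop :=
  ∀ ⦃a b : ℝ⦄, 0 ≤ a → 0 ≤ b → d u v = a + b → ∃ z, d u z = a ∧ d z v = b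

theorem isTotallyConvexBetween_of_dist_eq_abs_sub {f : ℝ → X}
    (hf : ∀ s t, d (f s) (f t) = |s - t|) (s t : ℝ) :
    IsTotallyConvexBetween d (f s) (f t) := by
  intro a b ha hb hab
  rw [hf] at hab
  rcases le_total s t with hst | hts
  · rw [abs_sub_comm, abs_of_nonneg (sub_nonneg.2 hst)] at hab
    refine ⟨f (s + a), ?_, ?_⟩
    · rw [hf, sub_add_cancel_left, abs_neg, abs_of_nonneg ha]
    · rw [hf, show s + a - t = -b by linarith, abs_neg, abs_of_nonneg hb]
  · rw [abs_of_nonneg (sub_nonneg.2 hts)] at hab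
    refine ⟨f (s - a), ?_, ?_⟩
    · rw [hf, sub_sub_cancel, abs_of_nonneg ha]
    · rw [hf, show s - a - t = b by linarith, abs_of_nonneg hb]

theorem IsTotallyConvexBetween.trans (triangle : ∀ x y z, d x z ≤ d x y + d y z)
    (huw : IsTotallyConvexBetween d u w) (hwv : IsTotallyConvexBetween d w v)
    (hw : d u w + d w v = d u v) : IsTotallyConvexBetween d u v := by
  intro a b ha hb hab
  rcases le_total a (d u w) with hle | hge
  · obtain ⟨z, huz, hzw⟩ := huw ha (sub_nonneg.2 hle) (add_sub_cancel a (d u w)).symm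
    have upper : d z v ≤ d z w + d w v := triangle z w v
    have lower : d u v ≤ d u z + d z v := triangle u z v
    exact ⟨z, huz, by linarith⟩
  · have hle : b ≤ d w v := by linarith
    obtain ⟨z, hwz, hzv⟩ := hwv (sub_nonneg.2 hle) hb (sub_add_cancel (d w v) b).symm
    have upper : d u z ≤ d u w + d w z := triangle u w z
    have lower : d u v ≤ d u z + d z v := triangle u z v
    exact ⟨z, by linarith, hzv⟩

end TotalConvexity

section RiverDist

variable {u v : ℝ × ℝ}

theorem riverDist_of_fst_eq_s6 (h : u.1 = v.1) : riverDist u v = |u.2 - v.2| :=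
  if_pos h

theorem riverDist_of_fst_ne_s6 (h : u.1 ≠ v.1) : riverDist u v = |u.2| + |v.2| + |u.1 - v.1| :=
  if_neg h

theorem riverDist_vertical (x s t : ℝ) : riverDist (x, s) (x, t) = |s - t| :=
  riverDist_of_fst_eq_s6 rfl

theorem riverDist_horizontal (s t : ℝ) : riverDist (s, 0) (t, 0) = |s - t| := by
  by_cases h : s = t <;> simp [riverDist, h]

theorem abs_snd_sub_le_riverDist (u v : ℝ × ℝ) : |u.2 - v.2| ≤ riverDist u v := by
  by_cases h : u.1 = v.1
  · exact (riverDist_of_fst_eq_s6 h).ge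
  · rw [riverDist_of_fst_ne_s6 h]
    exact (abs_sub u.2 v.2).trans (le_add_of_nonneg_right (abs_nonneg _))

theorem riverDist_triangle (u v w : ℝ × ℝ) :
    riverDist u w ≤ riverDist u v + riverDist v w := by
  by_cases huw : u.1 = w.1
  · calc riverDist u w = |u.2 - w.2| := riverDist_of_fst_eq_s6 huw
      _ ≤ |u.2 - v.2| + |v.2 - w.2| := abs_sub_le _ _ _
      _ ≤ riverDist u v + riverDist v w :=
        add_le_add (abs_snd_sub_le_riverDist u v) (abs_snd_sub_le_riverDist v w)
  rw [riverDist_of_fst_ne_s6 huw]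
  by_cases huv : u.1 = v.1
  · have hvw : v.1 ≠ w.1 := huv ▸ huw
    rw [riverDist_of_fst_eq_s6 huv, riverDist_of_fst_ne_s6 hvw, huv]
    linarith [abs_sub_abs_le_abs_sub u.2 v.2]
  rw [riverDist_of_fst_ne_s6 huv]
  by_cases hvw : v.1 = w.1
  · rw [riverDist_of_fst_eq_s6 hvw, hvw]
    linarith [abs_sub_abs_le_abs_sub w.2 v.2, abs_sub_comm v.2 w.2]
  · rw [riverDist_of_fst_ne_s6 hvw]
    linarith [abs_sub_le u.1 v.1 w.1, abs_nonneg v.2]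

theorem isTotallyConvexBetween_riverDist_vertical (x s t : ℝ) :
    IsTotallyConvexBetween riverDist (x, s) (x, t) :=
  isTotallyConvexBetween_of_dist_eq_abs_sub (riverDist_vertical x) s t

theorem isTotallyConvexBetween_riverDist_horizontal (s t : ℝ) :
    IsTotallyConvexBetween riverDist (s, 0) (t, 0) :=
  isTotallyConvexBetween_of_dist_eq_abs_sub riverDist_horizontal s t

theorem mk_zero_mem_riverSegment_left {x₁ x₂ : ℝ} (h : x₁ ≠ x₂) (y₁ y₂ : ℝ) :
    (x₁, 0) ∈ riverSegment (x₁, y₁) (x₂, y₂) := by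
  simp [riverSegment, riverDist, h, add_assoc]

theorem mk_zero_mem_riverSegment_right {x₁ x₂ : ℝ} (h : x₁ ≠ x₂) (y₁ y₂ : ℝ) :
    (x₂, 0) ∈ riverSegment (x₁, y₁) (x₂, y₂) := by
  simp [riverSegment, riverDist, h, add_right_comm]

end RiverDist

/-- (ℝ², d*) is totally convex. -/
theorem river_totally_convex :
    ∀ v₁ v₂ : ℝ × ℝ, v₁ ≠ v₂ → ∀ a b : ℝ, 0 < a → 0 < b →
      riverDist v₁ v₂ = a + b →
      ∃ v : ℝ × ℝ, riverDist v₁ v = a ∧ riverDist v v₂ = b := by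
  rintro ⟨x₁, y₁⟩ ⟨x₂, y₂⟩ - a b ha hb hab
  suffices h : IsTotallyConvexBetween riverDist (x₁, y₁) (x₂, y₂) from h ha.le hb.le hab
  by_cases hx : x₁ = x₂
  · subst hx
    exact isTotallyConvexBetween_riverDist_vertical x₁ y₁ y₂
  have to_river_point : IsTotallyConvexBetween riverDist (x₁, y₁) (x₂, 0) :=
    (isTotallyConvexBetween_riverDist_vertical x₁ y₁ 0).trans riverDist_triangle
      (isTotallyConvexBetween_riverDist_horizontal x₁ x₂) (mk_zero_mem_riverSegment_left hx y₁ 0)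
  exact to_river_point.trans riverDist_triangle
    (isTotallyConvexBetween_riverDist_vertical x₂ 0 y₂) (mk_zero_mem_riverSegment_right hx y₁ y₂)
end
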